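/- For every integer d ≥ 3, the vanishing ideal of the affine cone C_IG ⊆ ℂ^{d+1} over the inverse Gaussian moment parameterization equals the ideal I = I_3(H) generated by the 3×3 minors of H; that is, a polynomial f ∈ ℂ[m_0,…,m_d] vanishes at every point of C_IG if and only if f ∈ I. -/

import Mathlib

open MvPolynomial

/-- The `3 × d` matrix `H` of the inverse Gaussian moment variety: its first column is
`(m₀², 0, m₁²)ᵀ`, and its `c`-th column, for `2 ≤ c ≤ d`, is
`(m_{c-2}, (2c-3)·m_{c-1}, m_c)ᵀ`.  Columns are indexed by `Fin d`, with `c : Fin d`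
corresponding to the paper's column `c + 1`. -/
noncomputable def invGaussMatrix (d : ℕ) :
    Matrix (Fin 3) (Fin d) (MvPolynomial (Fin (d + 1)) ℂ) :=
  Matrix.of fun r c =>
    if c.val = 0 then
      ![X ⟨0, by omega⟩ ^ 2, 0, X ⟨1, by have := c.isLt; omega⟩ ^ 2] r
    else
      ![X ⟨c.val - 1, by have := c.isLt; omega⟩,
        C (2 * (c.val : ℂ) - 1) * X ⟨c.val, by have := c.isLt; omega⟩,
        X ⟨c.val + 1, by have := c.isLt; omega⟩] r

/-- The ideal `I₃(H)` generated by all `3 × 3` minors of `H`, i.e. determinants of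
submatrices obtained by choosing `3` of the `d` columns. -/
noncomputable def invGaussIdeal (d : ℕ) : Ideal (MvPolynomial (Fin (d + 1)) ℂ) :=
  Ideal.span
    { p | ∃ s : Fin 3 → Fin d, StrictMono s ∧ p = ((invGaussMatrix d).submatrix id s).det }

/-- The inverse Gaussian moment sequence: `m₀ = 1`, `m₁ = μ`, and
`mᵢ = (2i-3)·ν·μ²·m_{i-1} + μ²·m_{i-2}` for `i ≥ 2` (here `ν` plays the role of `1/λ`). -/
noncomputable def invGaussMoment (μ ν : ℂ) : ℕ → ℂ
  | 0 => 1
  | 1 => μ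
  | n + 2 => (2 * (n : ℂ) + 1) * ν * μ ^ 2 * invGaussMoment μ ν (n + 1)
      + μ ^ 2 * invGaussMoment μ ν n


namespace IG

noncomputable def mv (d k : ℕ) : MvPolynomial (Fin (d + 1)) ℂ :=
  if h : k < d + 1 then X ⟨k, h⟩ else 0

lemma mv_eq (d k : ℕ) (h : k < d + 1) : X ⟨k, h⟩ = mv d k := by
  simp [mv, h]

lemma strictMono3 {d : ℕ} (a b c : Fin d) (hab : a < b) (hbc : b < c) :
    StrictMono ![a, b, c] := by
  rw [Fin.strictMono_iff_lt_succ]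
  intro i
  fin_cases i
  · simpa using hab
  · simpa using hbc

lemma minorA (d a b c : ℕ) (ha : 1 ≤ a) (hab : a < b) (hbc : b < c) (hc : c < d) :
    mv d (a - 1) * ((C (2 * (b : ℂ) - 1) * mv d b) * mv d (c + 1)
        - (C (2 * (c : ℂ) - 1) * mv d c) * mv d (b + 1))
      - mv d (b - 1) * ((C (2 * (a : ℂ) - 1) * mv d a) * mv d (c + 1)
        - (C (2 * (c : ℂ) - 1) * mv d c) * mv d (a + 1))
      + mv d (c - 1) * ((C (2 * (a : ℂ) - 1) * mv d a) * mv d (b + 1)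
        - (C (2 * (b : ℂ) - 1) * mv d b) * mv d (a + 1)) ∈ invGaussIdeal d := by
  apply Ideal.subset_span
  refine ⟨![⟨a, by omega⟩, ⟨b, by omega⟩, ⟨c, hc⟩], strictMono3 _ _ _ hab hbc, ?_⟩
  have h1 : a ≠ 0 := by omega
  have h2 : b ≠ 0 := by omega
  have h3 : c ≠ 0 := by omega
  rw [Matrix.det_fin_three]
  simp only [invGaussMatrix, Matrix.submatrix_apply, Matrix.of_apply, id]
  simp [h1, h2, h3, mv_eq]
  ring

lemma minorB (d b c : ℕ) (hb : 1 ≤ b) (hbc : b < c) (hc : c < d) :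
    mv d 0 ^ 2 * ((C (2 * (b : ℂ) - 1) * mv d b) * mv d (c + 1)
        - (C (2 * (c : ℂ) - 1) * mv d c) * mv d (b + 1))
      + mv d 1 ^ 2 * (mv d (b - 1) * (C (2 * (c : ℂ) - 1) * mv d c)
        - mv d (c - 1) * (C (2 * (b : ℂ) - 1) * mv d b)) ∈ invGaussIdeal d := by
  apply Ideal.subset_span
  refine ⟨![⟨0, by omega⟩, ⟨b, by omega⟩, ⟨c, hc⟩], strictMono3 _ _ _ hb hbc, ?_⟩
  have h2 : b ≠ 0 := by omega
  have h3 : c ≠ 0 := by omega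
  rw [Matrix.det_fin_three]
  simp only [invGaussMatrix, Matrix.submatrix_apply, Matrix.of_apply, id]
  have e0 : (X 0 : MvPolynomial (Fin (d + 1)) ℂ) = mv d 0 := mv_eq d 0 (by omega)
  have e1 : ∀ h : 1 < d + 1, (X ⟨1, h⟩ : MvPolynomial (Fin (d + 1)) ℂ) = mv d 1 := mv_eq d 1
  simp [h2, h3, mv_eq, e0]
  ring

/-- evaluation at a point of the cone -/
noncomputable def ev (d : ℕ) (t μ ν : ℂ) : MvPolynomial (Fin (d + 1)) ℂ →+* ℂ :=
  eval (fun i : Fin (d + 1) => t * invGaussMoment μ ν i.val)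

lemma ev_mv (d k : ℕ) (hk : k ≤ d) (t μ ν : ℂ) :
    ev d t μ ν (mv d k) = t * invGaussMoment μ ν k := by
  have h : k < d + 1 := by omega
  simp [mv, h, ev]

lemma ev_ideal (d : ℕ) (t μ ν : ℂ) (f : MvPolynomial (Fin (d + 1)) ℂ)
    (hf : f ∈ invGaussIdeal d) : ev d t μ ν f = 0 := by
  have : invGaussIdeal d ≤ RingHom.ker (ev d t μ ν) := by
    rw [invGaussIdeal, Ideal.span_le]
    rintro p ⟨s, -, rfl⟩
    simp only [SetLike.mem_coe, RingHom.mem_ker]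
    rw [RingHom.map_det]
    rw [← Matrix.exists_vecMul_eq_zero_iff]
    refine ⟨![μ ^ 2, ν * μ ^ 2, -1], ?_, ?_⟩
    · intro h
      have := congrFun h 2
      simp at this
    · funext j
      simp only [Matrix.vecMul, dotProduct, Fin.sum_univ_three, RingHom.mapMatrix_apply,
        Matrix.map_apply, Matrix.submatrix_apply, id, invGaussMatrix, Matrix.of_apply]
      rcases hs : s j with ⟨k, hk⟩
      rcases k with _ | k
      · simp [ev, invGaussMoment]
        ring
      · simp [ev, invGaussMoment]
        ring
  exact this hf

/-- reduced moment polynomials -/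
noncomputable def pp : ℕ → Polynomial ℂ
  | 0 => 1
  | 1 => 1
  | n + 2 => Polynomial.C (2 * (n : ℂ) + 1) * Polynomial.X * pp (n + 1) + pp n

lemma moment_eq (μ ν : ℂ) (k : ℕ) :
    invGaussMoment μ ν k = μ ^ k * (pp k).eval (ν * μ) := by
  induction k using Nat.strong_induction_on with
  | _ k ih =>
    match k with
    | 0 => simp [invGaussMoment, pp]
    | 1 => simp [invGaussMoment, pp]
    | n + 2 =>
      simp only [invGaussMoment, pp]
      rw [ih n (by omega), ih (n + 1) (by omega)]
      simp
      ring

lemma pp_coprime (k : ℕ) : IsCoprime (pp k) (pp (k + 1)) := by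
  induction k with
  | zero => simp [pp, isCoprime_one_left]
  | succ k ih =>
    have : pp (k + 1 + 1) = pp k + pp (k + 1) * (Polynomial.C (2 * (k : ℂ) + 1) * Polynomial.X) := by
      simp only [pp]; ring
    rw [this]
    exact (ih.symm).add_mul_left_right _

lemma pp_deg (k : ℕ) : (pp (k + 1)).natDegree ≤ k ∧ (pp (k + 1)).coeff k ≠ 0 ∧
    (pp k).natDegree ≤ k := by
  induction k with
  | zero => simp [pp]
  | succ k ih =>
    obtain ⟨h1, h2, h3⟩ := ih
    have h4 : (Polynomial.C (2 * (k : ℂ) + 1) * Polynomial.X * pp (k + 1)).natDegree ≤ k + 1 := by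
      refine (Polynomial.natDegree_mul_le).trans ?_
      have := Polynomial.natDegree_C_mul_le (2 * (k : ℂ) + 1) Polynomial.X
      rw [Polynomial.natDegree_X] at this
      omega
    refine ⟨?_, ?_, by omega⟩
    · simp only [pp]
      exact (Polynomial.natDegree_add_le _ _).trans (max_le h4 (by omega))
    · simp only [pp]
      rw [Polynomial.coeff_add, Polynomial.coeff_eq_zero_of_natDegree_lt (p := pp k) (by omega),
        mul_assoc, Polynomial.coeff_C_mul, Polynomial.coeff_X_mul, add_zero]
      refine mul_ne_zero ?_ h2
      norm_cast

lemma pp_natDegree (k : ℕ) : (pp (k + 1)).natDegree = k :=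
  le_antisymm (pp_deg k).1 (Polynomial.le_natDegree_of_ne_zero (pp_deg k).2.1)

lemma sep {ι : Type*} (F : Finset ι) (z : ι → ℂ) (u v : ι → ℕ)
    (h : ∀ t μ : ℂ, t ≠ 0 → μ ≠ 0 → ∑ m ∈ F, z m * (t ^ u m * μ ^ v m) = 0) (k w : ℕ) :
    ∑ m ∈ F with u m = k ∧ v m = w, z m = 0 := by
  classical
  let e : ι → (Fin 2 →₀ ℕ) := fun m => Finsupp.single 0 (u m + 1) + Finsupp.single 1 (v m + 1)
  let R : MvPolynomial (Fin 2) ℂ := ∑ m ∈ F, monomial (e m) (z m)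
  have hR : R = 0 := by
    apply MvPolynomial.funext
    intro y
    have h1 : eval y R = (y 0 * y 1) * ∑ m ∈ F, z m * (y 0 ^ u m * y 1 ^ v m) := by
      simp only [R, map_sum, Finset.mul_sum]
      refine Finset.sum_congr rfl fun m _ => ?_
      simp [e, eval_monomial, Finsupp.prod_add_index', pow_add]
      ring
    rw [h1, map_zero]
    by_cases h0 : y 0 = 0
    · simp [h0]
    by_cases h1 : y 1 = 0
    · simp [h1]
    rw [h _ _ h0 h1, mul_zero]
  have h2 := congrArg (coeff (Finsupp.single 0 (k + 1) + Finsupp.single 1 (w + 1))) hR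
  simp only [R, coeff_sum, coeff_monomial, coeff_zero] at h2
  rw [Finset.sum_filter]
  rw [← h2]
  refine Finset.sum_congr rfl fun m _ => ?_
  congr 1
  simp only [e, eq_iff_iff]
  constructor
  · rintro ⟨rfl, rfl⟩; rfl
  · intro h
    have a := DFunLike.congr_fun h 0
    have b := DFunLike.congr_fun h 1
    simp at a b
    exact ⟨a, b⟩


lemma exp_gap (n a0 a1 a2 b0 b1 b2 : ℕ) (h1 : a0 + a1 + a2 = b0 + b1 + b2)
    (h2 : (n + 2) * a1 + (n + 3) * a2 = (n + 2) * b1 + (n + 3) * b2) (h3 : b2 ≤ a2) :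
    (a0 = b0 ∧ a1 = b1 ∧ a2 = b2) ∨ b2 + (n + 2) ≤ a2 := by
  obtain ⟨k, rfl⟩ := Nat.exists_eq_add_of_le h3
  have h4 : (n + 2) * (a1 + k) + k = (n + 2) * b1 := by nlinarith
  rcases Nat.eq_zero_or_pos k with rfl | hk
  · left
    have : a1 = b1 := by
      apply Nat.eq_of_mul_eq_mul_left (show 0 < n + 2 by omega)
      simpa using h4
    omega
  · right
    have : (n + 2) ∣ k := by
      have h5 : (n + 2) ∣ (n + 2) * (a1 + k) + k := ⟨b1, h4⟩
      exact (Nat.dvd_add_right (Dvd.intro _ rfl)).1 h5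
    have := Nat.le_of_dvd hk this
    omega

lemma indep_core (n D : ℕ) (hD : D = (n + 2) ^ 2) (c : Fin D → MvPolynomial (Fin 3) ℂ)
    (h : ∀ t μ x : ℂ, t ≠ 0 → μ ≠ 0 →
      ∑ k, eval ![t, t * (μ ^ (n + 2) * (pp (n + 2)).eval x),
        t * (μ ^ (n + 3) * (pp (n + 3)).eval x)] (c k) * x ^ (k : ℕ) = 0) :
    ∀ k, c k = 0 := by
  classical
  let F : Finset (Fin 3 →₀ ℕ) := Finset.univ.biUnion fun k => (c k).support
  let q : (Fin 3 →₀ ℕ) → Polynomial ℂ := fun m =>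
    ∑ k : Fin D, Polynomial.C (coeff m (c k)) * Polynomial.X ^ (k : ℕ)
  have hqcoeff : ∀ m (k : Fin D), (q m).coeff k = coeff m (c k) := by
    intro m k
    simp [q, Polynomial.finsetSum_coeff, Polynomial.coeff_X_pow, Fin.val_inj]
  have hqdeg : ∀ m, (q m).degree < D := by
    intro m
    exact Polynomial.degree_sum_fin_lt _
  have hev : ∀ (y : Fin 3 → ℂ) k, eval y (c k) =
      ∑ m ∈ F, coeff m (c k) * (y 0 ^ m 0 * y 1 ^ m 1 * y 2 ^ m 2) := by
    intro y k
    rw [eval_eq']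
    simp only [Fin.prod_univ_three]
    apply Finset.sum_subset
    · intro m hm
      simp only [F, Finset.mem_biUnion]
      exact ⟨k, Finset.mem_univ _, hm⟩
    · intro m _ hm
      simp [notMem_support_iff.1 hm]
  have hfib : ∀ k w : ℕ, ∑ m ∈ F with m 0 + m 1 + m 2 = k ∧ (n + 2) * m 1 + (n + 3) * m 2 = w,
      q m * (pp (n + 2) ^ m 1 * pp (n + 3) ^ m 2) = 0 := by
    intro k w
    apply Polynomial.funext
    intro x
    rw [Polynomial.eval_finsetSum, Polynomial.eval_zero]
    refine sep F (fun m => Polynomial.eval x (q m * (pp (n + 2) ^ m 1 * pp (n + 3) ^ m 2)))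
      (fun m => m 0 + m 1 + m 2) (fun m => (n + 2) * m 1 + (n + 3) * m 2) ?_ k w
    intro t μ ht hμ
    rw [← h t μ x ht hμ]
    simp only [hev, Finset.sum_mul]
    rw [Finset.sum_comm]
    refine Finset.sum_congr rfl fun m _ => ?_
    simp only [q, Polynomial.eval_mul, Polynomial.eval_finsetSum, Polynomial.eval_pow,
      Polynomial.eval_C, Polynomial.eval_X, Finset.sum_mul]
    refine Finset.sum_congr rfl fun k _ => ?_
    simp
    ring
  by_contra hne
  push Not at hne
  obtain ⟨k0, hk0⟩ := hne
  obtain ⟨m0, hm0⟩ := MvPolynomial.ne_zero_iff.1 hk0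
  have hG : (F.filter fun m => q m ≠ 0).Nonempty := by
    refine ⟨m0, ?_⟩
    simp only [Finset.mem_filter, F, Finset.mem_biUnion]
    refine ⟨⟨k0, Finset.mem_univ _, mem_support_iff.2 hm0⟩, ?_⟩
    intro h0
    rw [← hqcoeff, h0] at hm0
    simp at hm0
  obtain ⟨s, hs, hmin⟩ := Finset.exists_min_image _ (fun m => m 2) hG
  rw [Finset.mem_filter] at hs
  have hf := hfib (s 0 + s 1 + s 2) ((n + 2) * s 1 + (n + 3) * s 2)
  rw [← Finset.add_sum_erase _ _ (a := s) (by simp [hs.1])] at hf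
  have hdiv : pp (n + 3) ^ (s 2 + (n + 2)) ∣ q s * (pp (n + 2) ^ s 1 * pp (n + 3) ^ s 2) := by
    rw [eq_neg_of_add_eq_zero_left hf]
    rw [dvd_neg]
    apply Finset.dvd_sum
    intro m hm
    simp only [Finset.mem_erase, Finset.mem_filter] at hm
    by_cases hq : q m = 0
    · simp [hq]
    have h2 := hmin m (Finset.mem_filter.2 ⟨hm.2.1, hq⟩)
    rcases exp_gap n _ _ _ _ _ _ hm.2.2.1 hm.2.2.2 h2 with h3 | h3
    · exfalso
      apply hm.1
      ext i
      fin_cases i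
      · exact h3.1
      · exact h3.2.1
      · exact h3.2.2
    · exact (pow_dvd_pow _ h3).trans (Dvd.intro_left _ (mul_assoc _ _ _))
  have hQ : pp (n + 3) ≠ 0 := by
    intro h0
    have := pp_natDegree (n + 2)
    rw [h0] at this
    simp at this
  have hdiv2 : pp (n + 3) ^ (n + 2) ∣ q s * pp (n + 2) ^ s 1 := by
    rw [pow_add, ← mul_assoc, mul_comm (q s * _)] at hdiv
    exact (mul_dvd_mul_iff_left (pow_ne_zero _ hQ)).1 hdiv
  have hdiv3 : pp (n + 3) ^ (n + 2) ∣ q s :=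
    ((pp_coprime (n + 2)).symm.pow).dvd_of_dvd_mul_right hdiv2
  have h5 := Polynomial.natDegree_le_of_dvd hdiv3 hs.2
  rw [Polynomial.natDegree_pow, pp_natDegree (n + 2)] at h5
  have h6 := (Polynomial.natDegree_lt_iff_degree_lt hs.2).2 (hqdeg s)
  subst hD
  nlinarith

/-- the embedding of the Noether normalization -/
noncomputable def psi (n : ℕ) :
    MvPolynomial (Fin 3) ℂ →ₐ[ℂ] MvPolynomial (Fin (n + 3 + 1)) ℂ :=
  aeval ![mv (n + 3) 0, mv (n + 3) (n + 2), mv (n + 3) (n + 3)]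

lemma ev_psi (n : ℕ) (t μ ν : ℂ) (c : MvPolynomial (Fin 3) ℂ) :
    ev (n + 3) t μ ν (psi n c) =
      eval ![t, t * invGaussMoment μ ν (n + 2), t * invGaussMoment μ ν (n + 3)] c := by
  have : (ev (n + 3) t μ ν).comp (psi n).toRingHom =
      eval ![t, t * invGaussMoment μ ν (n + 2), t * invGaussMoment μ ν (n + 3)] := by
    apply MvPolynomial.ringHom_ext
    · intro r
      simp [psi, ev, MvPolynomial.algebraMap_eq]
    · intro i
      fin_cases i
      · simp [psi, ev_mv, invGaussMoment]
      · simp [psi, ev_mv]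
      · simp [psi, ev_mv]
  exact DFunLike.congr_fun this c

noncomputable def ee (n D k : ℕ) : MvPolynomial (Fin (n + 3 + 1)) ℂ :=
  (mv (n + 3) 0 * mv (n + 3) 2 - mv (n + 3) 1 ^ 2) ^ k * (mv (n + 3) 1 ^ 2) ^ (D - k)

lemma ev_ee (n D k : ℕ) (hk : k ≤ D) (t μ ν : ℂ) :
    ev (n + 3) t μ ν (ee n D k) = (t ^ 2 * μ ^ 2) ^ D * (ν * μ) ^ k := by
  obtain ⟨j, rfl⟩ := Nat.exists_eq_add_of_le hk
  simp only [ee, map_mul, map_pow, map_sub]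
  rw [ev_mv _ _ (by omega), ev_mv _ _ (by omega), ev_mv _ _ (by omega)]
  have h1 : t * invGaussMoment μ ν 0 * (t * invGaussMoment μ ν 2) - (t * invGaussMoment μ ν 1) ^ 2
      = (t ^ 2 * μ ^ 2) * (ν * μ) := by
    simp [invGaussMoment]
    ring
  have h2 : (t * invGaussMoment μ ν 1) ^ 2 = t ^ 2 * μ ^ 2 := by
    simp [invGaussMoment]
    ring
  rw [h1, h2]
  simp
  rw [mul_pow _ _ k, pow_add]
  ring

lemma indep (n D : ℕ) (hD : D = (n + 2) ^ 2) (c : Fin D → MvPolynomial (Fin 3) ℂ)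
    (h : ∀ t μ ν : ℂ, ∑ k : Fin D, ev (n + 3) t μ ν (psi n (c k)) * ev (n + 3) t μ ν (ee n D k) = 0) :
    ∀ k, c k = 0 := by
  apply indep_core n D hD
  intro t μ x ht hμ
  have h1 := h t μ (x / μ)
  have hx : x / μ * μ = x := div_mul_cancel₀ _ hμ
  have h2 : (t ^ 2 * μ ^ 2) ^ D ≠ 0 := by positivity
  apply (mul_right_injective₀ h2)
  simp only [mul_zero]
  rw [← h1, Finset.mul_sum]
  refine Finset.sum_congr rfl fun k _ => ?_
  rw [ev_ee _ _ _ k.2.le, ev_psi, moment_eq, moment_eq, hx]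
  ring

/-- linear algebra: a spanning family of cardinality `D` gives the kernel statement -/
lemma final (n : ℕ) (b : Fin (n + 2) × Fin (n + 2) → MvPolynomial (Fin (n + 3 + 1)) ℂ)
    (hb : ∀ f : MvPolynomial (Fin (n + 3 + 1)) ℂ,
      ∃ a : Fin (n + 2) × Fin (n + 2) → MvPolynomial (Fin 3) ℂ,
        f - ∑ j, psi n (a j) * b j ∈ invGaussIdeal (n + 3))
    (f : MvPolynomial (Fin (n + 3 + 1)) ℂ) (hf : ∀ t μ ν, ev (n + 3) t μ ν f = 0) :
    f ∈ invGaussIdeal (n + 3) := by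
  classical
  choose co hco using hb
  let D := (n + 2) ^ 2
  let v : Option (Fin D) → (Fin (n + 2) × Fin (n + 2) → MvPolynomial (Fin 3) ℂ) := fun o =>
    o.elim (co f) (fun k => co (ee n D k))
  have hv : ¬ LinearIndependent (MvPolynomial (Fin 3) ℂ) v := by
    intro hv
    have := hv.fintype_card_le_finrank
    simp [D] at this
    nlinarith
  rw [Fintype.not_linearIndependent_iff] at hv
  obtain ⟨g, hg, i, hi⟩ := hv
  have hg' : ∀ j, g none * co f j + ∑ k, g (some k) * co (ee n D k) j = 0 := by
    intro j
    have := congrFun hg j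
    simpa [Fintype.sum_option, v] using this
  have hexp : ∀ p t μ ν, ev (n + 3) t μ ν p =
      ∑ j, ev (n + 3) t μ ν (psi n (co p j)) * ev (n + 3) t μ ν (b j) := by
    intro p t μ ν
    have := ev_ideal _ t μ ν _ (hco p)
    rw [map_sub, sub_eq_zero, map_sum] at this
    simpa using this
  have h0 : ∀ k, g (some k) = 0 := by
    apply indep n D rfl
    intro t μ ν
    have h1 : ev (n + 3) t μ ν (psi n (g none)) * ev (n + 3) t μ ν f +
        ∑ k : Fin D, ev (n + 3) t μ ν (psi n (g (some k))) * ev (n + 3) t μ ν (ee n D k) = 0 := by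
      rw [hexp f]
      have : ∀ k : Fin D, ev (n + 3) t μ ν (psi n (g (some k))) * ev (n + 3) t μ ν (ee n D k) =
          ∑ j, ev (n + 3) t μ ν (psi n (g (some k))) *
            (ev (n + 3) t μ ν (psi n (co (ee n D k) j)) * ev (n + 3) t μ ν (b j)) := by
        intro k
        rw [← Finset.mul_sum, ← hexp]
      simp only [this]
      rw [Finset.sum_comm, Finset.mul_sum, ← Finset.sum_add_distrib]
      apply Finset.sum_eq_zero
      intro j _
      have h2 := congrArg (fun z => ev (n + 3) t μ ν (psi n z)) (hg' j)
      simp only [map_add, map_mul, map_sum, map_zero] at h2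
      rw [← zero_mul (ev (n + 3) t μ ν (b j)), ← h2, add_mul, Finset.sum_mul]
      simp only [mul_assoc]
    rw [hf, mul_zero, zero_add] at h1
    exact h1
  have hn : g none ≠ 0 := by
    rcases i with _ | k
    · exact hi
    · exact absurd (h0 k) hi
  have ha : ∀ j, co f j = 0 := by
    intro j
    have := hg' j
    simp only [h0, zero_mul, Finset.sum_const_zero, add_zero] at this
    exact (mul_eq_zero.1 this).resolve_left hn
  have := hco f
  simpa [ha] using this

noncomputable def uu (n k : ℕ) : MvPolynomial (Fin (n + 3 + 1)) ℂ :=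
  if k = 0 then 1 else mv (n + 3) (k + 1)

/-- the module generators -/
noncomputable def bb (n : ℕ) (p : Fin (n + 2) × Fin (n + 2)) : MvPolynomial (Fin (n + 3 + 1)) ℂ :=
  if p.1.val < p.2.val then uu n p.1 * uu n (p.2.val - 1)
  else if p.2.val < p.1.val then mv (n + 3) 1 * (uu n p.2 * uu n (p.1.val - 1))
  else if p.1.val < n + 1 then mv (n + 3) 1 ^ 2 * uu n p.1
  else mv (n + 3) 1 ^ 3

def MM (n : ℕ) (f : MvPolynomial (Fin (n + 3 + 1)) ℂ) : Prop :=
  ∃ a : Fin (n + 2) × Fin (n + 2) → MvPolynomial (Fin 3) ℂ,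
    f - ∑ j, psi n (a j) * bb n j ∈ invGaussIdeal (n + 3)

lemma MM_ideal {n : ℕ} {f : MvPolynomial (Fin (n + 3 + 1)) ℂ} (hf : f ∈ invGaussIdeal (n + 3)) :
    MM n f := ⟨0, by simpa using hf⟩

lemma MM_add {n : ℕ} {f g : MvPolynomial (Fin (n + 3 + 1)) ℂ} (hf : MM n f) (hg : MM n g) :
    MM n (f + g) := by
  obtain ⟨a, ha⟩ := hf
  obtain ⟨b, hb⟩ := hg
  refine ⟨a + b, ?_⟩
  have := add_mem ha hb
  convert this using 1
  simp only [Pi.add_apply, map_add, add_mul, Finset.sum_add_distrib]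
  ring

lemma MM_psi {n : ℕ} {f : MvPolynomial (Fin (n + 3 + 1)) ℂ} (c : MvPolynomial (Fin 3) ℂ)
    (hf : MM n f) : MM n (psi n c * f) := by
  obtain ⟨a, ha⟩ := hf
  refine ⟨fun j => c * a j, ?_⟩
  have := Ideal.mul_mem_left _ (psi n c) ha
  convert this using 1
  simp only [map_mul, mul_sub, Finset.mul_sum, mul_assoc]

lemma MM_C {n : ℕ} {f : MvPolynomial (Fin (n + 3 + 1)) ℂ} (c : ℂ) (hf : MM n f) :
    MM n (C c * f) := by
  have := MM_psi (C c) hf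
  simpa [psi, MvPolynomial.algebraMap_eq] using this

lemma MM_sub {n : ℕ} {f g : MvPolynomial (Fin (n + 3 + 1)) ℂ} (hf : MM n f) (hg : MM n g) :
    MM n (f - g) := by
  have := MM_add hf (MM_C (-1) hg)
  convert this using 1
  simp
  ring

lemma MM_of_C {n : ℕ} {f : MvPolynomial (Fin (n + 3 + 1)) ℂ} (c : ℂ) (hc : c ≠ 0)
    (hf : MM n (C c * f)) : MM n f := by
  have := MM_C c⁻¹ hf
  rw [← mul_assoc, ← C_mul, inv_mul_cancel₀ hc, C_1, one_mul] at this
  exact this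

lemma MM_bb {n : ℕ} (p : Fin (n + 2) × Fin (n + 2)) : MM n (bb n p) := by
  classical
  refine ⟨Pi.single p 1, ?_⟩
  have : ∑ j, psi n (Pi.single (M := fun _ => MvPolynomial (Fin 3) ℂ) p 1 j) * bb n j = bb n p := by
    rw [Finset.sum_eq_single p]
    · simp
    · intro j _ hj
      simp [Pi.single_eq_of_ne hj]
    · simp
  rw [this, sub_self]
  exact zero_mem _

lemma MM_mv {n : ℕ} {f : MvPolynomial (Fin (n + 3 + 1)) ℂ} (k : ℕ)
    (hk : k = 0 ∨ k = n + 2 ∨ k = n + 3) (hf : MM n f) : MM n (mv (n + 3) k * f) := by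
  rcases hk with rfl | rfl | rfl
  · simpa [psi] using MM_psi (X 0) hf
  · simpa [psi] using MM_psi (X 1) hf
  · simpa [psi] using MM_psi (X 2) hf

/-- monomial attached to a multiset of indices -/
noncomputable def mon (n : ℕ) (s : Multiset ℕ) : MvPolynomial (Fin (n + 3 + 1)) ℂ :=
  (s.map (mv (n + 3))).prod

lemma mon_cons (n k : ℕ) (s : Multiset ℕ) : mon n (k ::ₘ s) = mv (n + 3) k * mon n s := by
  simp [mon]

lemma mon_zero (n : ℕ) : mon n 0 = 1 := by simp [mon]

lemma mon_add (n : ℕ) (s t : Multiset ℕ) : mon n (s + t) = mon n s * mon n t := by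
  simp [mon]

def sq (s : Multiset ℕ) : ℕ := (s.map (fun k => k ^ 2)).sum

lemma sq_cons (k : ℕ) (s : Multiset ℕ) : sq (k ::ₘ s) = k ^ 2 + sq s := by simp [sq]

lemma sq_le (N : ℕ) (s : Multiset ℕ) (h : ∀ k ∈ s, k ≤ N) : sq s ≤ s.card * N ^ 2 := by
  induction s using Multiset.induction_on with
  | empty => simp [sq]
  | cons a s ih =>
    rw [sq_cons, Multiset.card_cons]
    have h1 := ih fun k hk => h k (Multiset.mem_cons_of_mem hk)
    have h2 : a ^ 2 ≤ N ^ 2 := Nat.pow_le_pow_left (h a (Multiset.mem_cons_self _ _)) 2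
    linarith

lemma MM_mon_mul {n : ℕ} {f : MvPolynomial (Fin (n + 3 + 1)) ℂ} (s : Multiset ℕ)
    (hs : ∀ k ∈ s, k = 0 ∨ k = n + 2 ∨ k = n + 3) (hf : MM n f) : MM n (mon n s * f) := by
  induction s using Multiset.induction_on with
  | empty => simpa [mon_zero] using hf
  | cons a s ih =>
    rw [mon_cons, mul_assoc]
    exact MM_mv a (hs a (Multiset.mem_cons_self _ _))
      (ih fun k hk => hs k (Multiset.mem_cons_of_mem hk))

lemma odd_ne (j : ℕ) : (2 * (j : ℂ) - 1) ≠ 0 := by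
  intro h
  have h1 : (2 * (j : ℂ)) = 1 := by linear_combination h
  have h2 : 2 * j = 1 := by exact_mod_cast h1
  omega

lemma rewriteA (n i j k : ℕ) (r : Multiset ℕ) (hi : 2 ≤ i) (hij : i ≤ j) (hjk : j ≤ k)
    (hk : k ≤ n + 1)
    (H : ∀ x y z : ℕ, x ≤ n + 3 → y ≤ n + 3 → z ≤ n + 3 →
      i ^ 2 + j ^ 2 + k ^ 2 < x ^ 2 + y ^ 2 + z ^ 2 → MM n (mon n (x ::ₘ y ::ₘ z ::ₘ r))) :
    MM n (mon n (i ::ₘ j ::ₘ k ::ₘ r)) := by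
  obtain ⟨i, rfl⟩ := Nat.exists_eq_add_of_le hi
  obtain ⟨p, rfl⟩ := Nat.exists_eq_add_of_le hij
  obtain ⟨q, rfl⟩ := Nat.exists_eq_add_of_le hjk
  have h0 := minorA (n + 3) (i + 1) (2 + i + p) (2 + i + p + q + 1) (by omega) (by omega)
    (by omega) (by omega)
  have h1 := MM_ideal (Ideal.mul_mem_right (mon n r) _ h0)
  have e1 : i + 1 - 1 = i := by omega
  have e2 : 2 + i + p - 1 = 1 + i + p := by omega
  have e3 : 2 + i + p + q + 1 - 1 = 2 + i + p + q := by omega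
  have e4 : i + 1 + 1 = 2 + i := by omega
  rw [e1, e2, e3, e4] at h1
  have t1 := H i (2 + i + p) (2 + i + p + q + 1 + 1) (by omega) (by omega) (by omega)
    (by nlinarith [Nat.zero_le (i * p), Nat.zero_le (i * q), Nat.zero_le (p * q)])
  have t2 := H i (2 + i + p + q + 1) (2 + i + p + 1) (by omega) (by omega) (by omega)
    (by nlinarith [Nat.zero_le (i * p), Nat.zero_le (i * q), Nat.zero_le (p * q)])
  have t3 := H (1 + i + p) (i + 1) (2 + i + p + q + 1 + 1) (by omega) (by omega) (by omega)
    (by nlinarith [Nat.zero_le (i * p), Nat.zero_le (i * q), Nat.zero_le (p * q)])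
  have t4 := H (1 + i + p) (2 + i + p + q + 1) (2 + i) (by omega) (by omega) (by omega)
    (by nlinarith [Nat.zero_le (i * p), Nat.zero_le (i * q), Nat.zero_le (p * q)])
  have t5 := H (2 + i + p + q) (i + 1) (2 + i + p + 1) (by omega) (by omega) (by omega)
    (by nlinarith [Nat.zero_le (i * p), Nat.zero_le (i * q), Nat.zero_le (p * q)])
  simp only [mon_cons] at t1 t2 t3 t4 t5 ⊢
  generalize (2 * ((i + 1 : ℕ) : ℂ) - 1) = ca at *
  generalize (2 * ((2 + i + p + q + 1 : ℕ) : ℂ) - 1) = cc at *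
  have hcb := odd_ne (2 + i + p)
  generalize (2 * ((2 + i + p : ℕ) : ℂ) - 1) = cb at *
  apply MM_of_C cb hcb
  have := MM_sub (MM_add (MM_sub (MM_add (MM_sub (MM_C cb t1) (MM_C cc t2)) (MM_C cc t4))
    (MM_C ca t3)) (MM_C ca t5)) h1
  convert this using 1
  ring

lemma rewriteB (n j k : ℕ) (r : Multiset ℕ) (hj : 1 ≤ j) (hjk : j ≤ k) (hk : k ≤ n + 1)
    (H : ∀ x y z w : ℕ, x ≤ n + 3 → y ≤ n + 3 → z ≤ n + 3 → w ≤ n + 3 →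
      1 + 1 + j ^ 2 + k ^ 2 < x ^ 2 + y ^ 2 + z ^ 2 + w ^ 2 →
        MM n (mon n (x ::ₘ y ::ₘ z ::ₘ w ::ₘ r))) :
    MM n (mon n (1 ::ₘ 1 ::ₘ j ::ₘ k ::ₘ r)) := by
  obtain ⟨j, rfl⟩ := Nat.exists_eq_add_of_le hj
  obtain ⟨q, rfl⟩ := Nat.exists_eq_add_of_le hjk
  have h0 := minorB (n + 3) (1 + j) (1 + j + q + 1) (by omega) (by omega) (by omega)
  have h1 := MM_ideal (Ideal.mul_mem_right (mon n r) _ h0)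
  have e1 : 1 + j - 1 = j := by omega
  have e3 : 1 + j + q + 1 - 1 = 1 + j + q := by omega
  rw [e1, e3] at h1
  have t1 := H 0 0 (1 + j) (1 + j + q + 1 + 1) (by omega) (by omega) (by omega) (by omega)
    (by nlinarith [Nat.zero_le (j * q)])
  have t2 := H 0 0 (1 + j + q + 1) (1 + j + 1) (by omega) (by omega) (by omega) (by omega)
    (by nlinarith [Nat.zero_le (j * q)])
  have t3 := H 1 1 j (1 + j + q + 1) (by omega) (by omega) (by omega) (by omega)
    (by nlinarith [Nat.zero_le (j * q)])
  simp only [mon_cons] at t1 t2 t3 ⊢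
  generalize (2 * ((1 + j + q + 1 : ℕ) : ℂ) - 1) = cc at *
  have hcb := odd_ne (1 + j)
  generalize (2 * ((1 + j : ℕ) : ℂ) - 1) = cb at *
  apply MM_of_C cb hcb
  have := MM_sub (MM_add (MM_sub (MM_C cb t1) (MM_C cc t2)) (MM_C cc t3)) h1
  convert this using 1
  ring

lemma MM_low {n e : ℕ} (he : e ≤ 1) (i j : ℕ) (hij : i ≤ j) (hj : j ≤ n) :
    MM n (mv (n + 3) 1 ^ e * (uu n i * uu n j)) := by
  obtain rfl | rfl : e = 0 ∨ e = 1 := by omega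
  · have := MM_bb (n := n) (⟨i, by omega⟩, ⟨j + 1, by omega⟩)
    have h : i < j + 1 := by omega
    simpa [bb, h] using this
  · have := MM_bb (n := n) (⟨j + 1, by omega⟩, ⟨i, by omega⟩)
    have h : i < j + 1 := by omega
    have h' : ¬ (j + 1 < i) := by omega
    simpa [bb, h, h'] using this

lemma MM_two {n : ℕ} (i : ℕ) (hi : i ≤ n) : MM n (mv (n + 3) 1 ^ 2 * uu n i) := by
  have := MM_bb (n := n) (⟨i, by omega⟩, ⟨i, by omega⟩)
  have h : i < n + 1 := by omega
  simpa [bb, h] using this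

lemma MM_three {n : ℕ} : MM n (mv (n + 3) 1 ^ 3) := by
  have := MM_bb (n := n) (⟨n + 1, by omega⟩, ⟨n + 1, by omega⟩)
  simpa [bb] using this

lemma split (n : ℕ) (s : Multiset ℕ) (hs : ∀ k ∈ s, k ≤ n + 3) :
    ∃ (a : Multiset ℕ) (e : ℕ) (l : List ℕ), (∀ k ∈ a, k = 0 ∨ k = n + 2 ∨ k = n + 3) ∧
      (∀ k ∈ l, 2 ≤ k ∧ k ≤ n + 1) ∧ l.Pairwise (· ≤ ·) ∧ s = (l : Multiset ℕ) + Multiset.replicate e 1 + a := by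
  suffices h : ∃ (a : Multiset ℕ) (e : ℕ) (l : Multiset ℕ),
      (∀ k ∈ a, k = 0 ∨ k = n + 2 ∨ k = n + 3) ∧
      (∀ k ∈ l, 2 ≤ k ∧ k ≤ n + 1) ∧ s = l + Multiset.replicate e 1 + a by
    obtain ⟨a, e, l, h1, h2, h3⟩ := h
    refine ⟨a, e, l.sort (· ≤ ·), h1, ?_, Multiset.pairwise_sort _ _, ?_⟩
    · intro k hk
      exact h2 k (by simpa using hk)
    · rw [Multiset.sort_eq]
      exact h3
  induction s using Multiset.induction_on with
  | empty => exact ⟨0, 0, 0, by simp⟩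
  | cons x s ih =>
    obtain ⟨a, e, l, h1, h2, h3⟩ := ih fun k hk => hs k (Multiset.mem_cons_of_mem hk)
    have hx := hs x (Multiset.mem_cons_self _ _)
    by_cases c1 : x = 1
    · refine ⟨a, e + 1, l, h1, h2, ?_⟩
      rw [h3, c1, Multiset.replicate_succ]
      simp
    by_cases c2 : 2 ≤ x ∧ x ≤ n + 1
    · refine ⟨a, e, x ::ₘ l, h1, ?_, ?_⟩
      · intro k hk
        rcases Multiset.mem_cons.1 hk with rfl | hk
        · exact c2
        · exact h2 k hk
      · rw [h3]
        simp
    · refine ⟨x ::ₘ a, e, l, ?_, h2, ?_⟩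
      · intro k hk
        rcases Multiset.mem_cons.1 hk with rfl | hk
        · omega
        · exact h1 k hk
      · rw [h3]
        simp

lemma MM_mon (n : ℕ) : ∀ (N : ℕ) (s : Multiset ℕ), (∀ k ∈ s, k ≤ n + 3) →
    s.card * (n + 3) ^ 2 - sq s < N → MM n (mon n s) := by
  intro N
  induction N with
  | zero => intro s _ h; omega
  | succ N ih =>
    intro s hs hN
    obtain ⟨a, e, l, ha, hl, hsort, rfl⟩ := split n s hs
    have caseA : ∀ i j k r, 2 ≤ i → i ≤ j → j ≤ k → k ≤ n + 1 →
        (l : Multiset ℕ) + Multiset.replicate e 1 + a = i ::ₘ j ::ₘ k ::ₘ r →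
        MM n (mon n ((l : Multiset ℕ) + Multiset.replicate e 1 + a)) := by
      intro i j k r h1 h2 h3 h4 h5
      rw [h5] at hs hN ⊢
      apply rewriteA n i j k r h1 h2 h3 h4
      intro x y z hx hy hz hlt
      have hb : ∀ w ∈ x ::ₘ y ::ₘ z ::ₘ r, w ≤ n + 3 := by
        intro w hw
        simp only [Multiset.mem_cons] at hw hs
        rcases hw with rfl | rfl | rfl | hw
        · exact hx
        · exact hy
        · exact hz
        · exact hs w (by tauto)
      apply ih _ hb
      have := sq_le _ _ hb
      simp only [sq_cons, Multiset.card_cons] at this hN ⊢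
      omega
    have caseB : ∀ j k r, 1 ≤ j → j ≤ k → k ≤ n + 1 →
        (l : Multiset ℕ) + Multiset.replicate e 1 + a = 1 ::ₘ 1 ::ₘ j ::ₘ k ::ₘ r →
        MM n (mon n ((l : Multiset ℕ) + Multiset.replicate e 1 + a)) := by
      intro j k r h2 h3 h4 h5
      rw [h5] at hs hN ⊢
      apply rewriteB n j k r h2 h3 h4
      intro x y z v hx hy hz hv hlt
      have hb : ∀ w ∈ x ::ₘ y ::ₘ z ::ₘ v ::ₘ r, w ≤ n + 3 := by
        intro w hw
        simp only [Multiset.mem_cons] at hw hs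
        rcases hw with rfl | rfl | rfl | rfl | hw
        · exact hx
        · exact hy
        · exact hz
        · exact hv
        · exact hs w (by tauto)
      apply ih _ hb
      have := sq_le _ _ hb
      simp only [sq_cons, Multiset.card_cons] at this hN ⊢
      omega
    have fin : MM n (mv (n + 3) 1 ^ e * mon n (l : Multiset ℕ)) →
        MM n (mon n ((l : Multiset ℕ) + Multiset.replicate e 1 + a)) := by
      intro h
      have h1 := MM_mon_mul a ha h
      convert h1 using 1
      rw [mon_add, mon_add]
      have : mon n (Multiset.replicate e 1) = mv (n + 3) 1 ^ e := by simp [mon]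
      rw [this]
      ring
    have hu : ∀ k, 2 ≤ k → uu n (k - 1) = mv (n + 3) k := by
      intro k hk
      have h1 : k - 1 ≠ 0 := by omega
      have h2 : k - 1 + 1 = k := by omega
      simp [uu, h1, h2]
    have hu0 : uu n 0 = 1 := by simp [uu]
    rcases l with _ | ⟨i, _ | ⟨j, _ | ⟨k, l⟩⟩⟩
    · -- no middle variables
      by_cases h4 : 4 ≤ e
      · obtain ⟨e', rfl⟩ := Nat.exists_eq_add_of_le' h4
        refine caseB 1 1 (Multiset.replicate e' 1 + a) le_rfl le_rfl (by omega) ?_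
        simp [Multiset.replicate_succ]
      apply fin
      have : mon n (([] : List ℕ) : Multiset ℕ) = 1 := by simp [mon]
      rw [this]
      by_cases h1 : e ≤ 1
      · simpa [hu0] using MM_low h1 0 0 le_rfl (Nat.zero_le n)
      by_cases h2 : e = 2
      · subst h2
        simpa [hu0] using MM_two 0 (Nat.zero_le n)
      · have h3 : e = 3 := by omega
        subst h3
        simpa using MM_three
    · have hi := hl i (by simp)
      by_cases h4 : 3 ≤ e
      · obtain ⟨e', rfl⟩ := Nat.exists_eq_add_of_le' h4
        refine caseB 1 i (Multiset.replicate e' 1 + a) le_rfl (by omega) (by omega) ?_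
        ext y
        simp [Multiset.replicate_succ, Multiset.count_cons]
      apply fin
      have : mon n (([i] : List ℕ) : Multiset ℕ) = uu n (i - 1) := by simp [mon, hu i hi.1]
      rw [this]
      by_cases h1 : e ≤ 1
      · simpa [hu0] using MM_low (n := n) h1 0 (i - 1) (by omega) (by omega)
      · have h2 : e = 2 := by omega
        subst h2
        exact MM_two _ (by omega)
    · have hi := hl i (by simp)
      have hj := hl j (by simp)
      have hij : i ≤ j := by simpa using hsort
      by_cases h4 : 2 ≤ e
      · obtain ⟨e', rfl⟩ := Nat.exists_eq_add_of_le' h4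
        refine caseB i j (Multiset.replicate e' 1 + a) (by omega) (by omega) (by omega) ?_
        ext y
        simp [Multiset.replicate_succ, Multiset.count_cons, ← Multiset.cons_coe]
      apply fin
      have : mon n (([i, j] : List ℕ) : Multiset ℕ) = uu n (i - 1) * uu n (j - 1) := by
        simp [mon, hu i hi.1, hu j hj.1]
      rw [this]
      exact MM_low (by omega) _ _ (by omega) (by omega)
    · have hi := hl i (by simp)
      have hj := hl j (by simp)
      have hk := hl k (by simp)
      simp only [List.pairwise_cons] at hsort
      have hij : i ≤ j := hsort.1 j (by simp)
      have hjk : j ≤ k := hsort.2.1 k (by simp)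
      refine caseA i j k ((l : Multiset ℕ) + Multiset.replicate e 1 + a) hi.1 hij hjk hk.2 ?_
      simp [← Multiset.cons_coe]

lemma MM_all (n : ℕ) (f : MvPolynomial (Fin (n + 3 + 1)) ℂ) : MM n f := by
  suffices h : ∀ s : Multiset ℕ, (∀ k ∈ s, k ≤ n + 3) → MM n (f * mon n s) by
    simpa [mon_zero] using h 0 (by simp)
  induction f using MvPolynomial.induction_on with
  | C a =>
    intro s hs
    exact MM_C a (MM_mon n _ s hs (Nat.lt_succ_self _))
  | add p q hp hq =>
    intro s hs
    rw [add_mul]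
    exact MM_add (hp s hs) (hq s hs)
  | mul_X p i hp =>
    intro s hs
    have := hp (i.val ::ₘ s) (by
      intro k hk
      rcases Multiset.mem_cons.1 hk with rfl | hk
      · have := i.2
        omega
      · exact hs k hk)
    rw [mon_cons, ← mv_eq (n + 3) i.val i.2, ← mul_assoc] at this
    exact this

end IG

/-- For `d ≥ 3`, a polynomial vanishes on the affine cone over the inverse Gaussian moment
parameterization iff it lies in the determinantal ideal `I₃(H)`. -/
theorem invGauss_vanishingIdeal (d : ℕ) (hd : 3 ≤ d) (f : MvPolynomial (Fin (d + 1)) ℂ) :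
    (∀ t μ ν : ℂ, eval (fun i : Fin (d + 1) => t * invGaussMoment μ ν i.val) f = 0) ↔
      f ∈ invGaussIdeal d := by
  constructor
  · intro h
    obtain ⟨n, rfl⟩ := Nat.exists_eq_add_of_le' hd
    exact IG.final n (IG.bb n) (IG.MM_all n) f h
  · intro h t μ ν
    exact IG.ev_ideal d t μ ν f h
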